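/- Let k = 2, so R = [r¹ r²] ∈ ℚ^{2×2} with nonzero columns, and let α₁ s₁ + α₂ s₂ ≥ 1 with α₁, α₂ ≥ 0 be a facet-defining inequality for conv(P([r¹ r²],f)). Then the split rank of α₁ s₁ + α₂ s₂ ≥ 1 with respect to P([r¹ r²],f)⁰ is at most two. -/

import Mathlib

open Set Pointwise

abbrev Pt : Type := Fin 2 → ℝ

def IsIntPt (x : Pt) : Prop := ∀ j, ∃ z : ℤ, x j = (z : ℝ)

def IsRatPt (x : Pt) : Prop := ∀ j, ∃ q : ℚ, x j = (q : ℝ)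

/-- The mixed-integer set `P(R,f)`. -/
def mixedP (k : ℕ) (r : Fin k → Pt) (f : Pt) : Set (Pt × (Fin k → ℝ)) :=
  {p | IsIntPt p.1 ∧ (∀ i, 0 ≤ p.2 i) ∧ p.1 = f + ∑ i, p.2 i • r i}

/-- The linear relaxation `P(R,f)⁰`. -/
def relaxP (k : ℕ) (r : Fin k → Pt) (f : Pt) : Set (Pt × (Fin k → ℝ)) :=
  {p | (∀ i, 0 ≤ p.2 i) ∧ p.1 = f + ∑ i, p.2 i • r i}

/-- The convex cone generated by a set (all nonnegative combinations). -/
def coneGen (S : Set Pt) : Set Pt :=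
  {x | ∃ (n : ℕ) (c : Fin n → ℝ) (v : Fin n → Pt),
    (∀ j, 0 ≤ c j) ∧ (∀ j, v j ∈ S) ∧ x = ∑ j, c j • v j}

/-- The induced lattice-free set `L_α`. -/
def inducedSet (k : ℕ) (r : Fin k → Pt) (f : Pt) (α : Fin k → ℝ) : Set Pt :=
  convexHull ℝ ({f} ∪ {x | ∃ i, 0 < α i ∧ x = f + (α i)⁻¹ • r i}) +
    coneGen {x | ∃ i, α i = 0 ∧ x = r i}

def LatticeFree (S : Set Pt) : Prop := ∀ x ∈ interior S, ¬ IsIntPt x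

/-- Validity of `∑ αᵢ sᵢ ≥ γ` for `conv(P(R,f))`. -/
def ValidIneq (k : ℕ) (r : Fin k → Pt) (f : Pt) (α : Fin k → ℝ) (γ : ℝ) : Prop :=
  ∀ p ∈ mixedP k r f, γ ≤ ∑ i, α i * p.2 i

noncomputable def affDim {V : Type*} [AddCommGroup V] [Module ℝ V] (S : Set V) : ℕ :=
  Module.finrank ℝ (affineSpan ℝ S).direction

/-- Facet-defining inequality: valid and its face of the closed convex hull has
affine dimension exactly one less. -/
def IsFacet (k : ℕ) (r : Fin k → Pt) (f : Pt) (α : Fin k → ℝ) (γ : ℝ) : Prop :=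
  ValidIneq k r f α γ ∧
  affDim {p ∈ closure (convexHull ℝ (mixedP k r f)) | ∑ i, α i * p.2 i = γ} + 1 =
    affDim (convexHull ℝ (mixedP k r f))

def splitClosure (k : ℕ) (C : Set (Pt × (Fin k → ℝ))) : Set (Pt × (Fin k → ℝ)) :=
  ⋂ (π : Fin 2 → ℤ) (π₀ : ℤ),
    convexHull ℝ ((C ∩ {p | ∑ j, (π j : ℝ) * p.1 j ≤ (π₀ : ℝ)}) ∪
      (C ∩ {p | (π₀ : ℝ) + 1 ≤ ∑ j, (π j : ℝ) * p.1 j}))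

def closures (k : ℕ) (r : Fin k → Pt) (f : Pt) : ℕ → Set (Pt × (Fin k → ℝ))
  | 0 => relaxP k r f
  | n + 1 => splitClosure k (closures k r f n)

/-- The split rank of `∑ αᵢ sᵢ ≥ γ` w.r.t. `P(R,f)⁰`: least `j` such that the
inequality is valid on the `j`-th split closure, `⊤` if none exists. -/
noncomputable def splitRank (k : ℕ) (r : Fin k → Pt) (f : Pt) (α : Fin k → ℝ) (γ : ℝ) : ℕ∞ :=
  sInf {j : ℕ∞ | ∃ n : ℕ, j = (n : ℕ∞) ∧ ∀ p ∈ closures k r f n, γ ≤ ∑ i, α i * p.2 i}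

def IsSplitSet (S : Set Pt) : Prop :=
  ∃ (π : Fin 2 → ℤ) (π₀ : ℤ), π ≠ 0 ∧
    S = {x : Pt | (π₀ : ℝ) ≤ ∑ j, (π j : ℝ) * x j ∧ ∑ j, (π j : ℝ) * x j ≤ (π₀ : ℝ) + 1}

/-- Triangle of type `T¹`. -/
def IsT1 (S : Set Pt) : Prop :=
  ∃ v : Fin 3 → Pt, AffineIndependent ℝ v ∧ (∀ i, IsIntPt (v i)) ∧
    S = convexHull ℝ (Set.range v) ∧
    ∀ i j, i ≠ j → ∃! z, z ∈ openSegment ℝ (v i) (v j) ∧ IsIntPt z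

/-- Triangle of type `T^{2A}`. -/
def IsT2A (S : Set Pt) : Prop :=
  ∃ v0 v1 v2 : Pt, AffineIndependent ℝ ![v0, v1, v2] ∧ ¬ IsIntPt v0 ∧
    S = convexHull ℝ {v0, v1, v2} ∧
    (∃ z1 z2 : Pt, z1 ≠ z2 ∧ IsIntPt z1 ∧ IsIntPt z2 ∧
      z1 ∈ segment ℝ v1 v2 ∧ z2 ∈ segment ℝ v1 v2) ∧
    (∃! z, z ∈ openSegment ℝ v0 v1 ∧ IsIntPt z) ∧
    (∃! z, z ∈ openSegment ℝ v0 v2 ∧ IsIntPt z)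

/-- Triangle of type `T^{2B}`. -/
def IsT2B (S : Set Pt) : Prop :=
  ∃ v0 v1 v2 : Pt, AffineIndependent ℝ ![v0, v1, v2] ∧ ¬ IsIntPt v0 ∧
    S = convexHull ℝ {v0, v1, v2} ∧
    (∃ z1 z2 : Pt, z1 ≠ z2 ∧ IsIntPt z1 ∧ IsIntPt z2 ∧
      z1 ∈ segment ℝ v1 v2 ∧ z2 ∈ segment ℝ v1 v2) ∧
    (∃! z, z ∈ openSegment ℝ v0 v1 ∧ IsIntPt z) ∧
    (∀ z ∈ openSegment ℝ v0 v2, ¬ IsIntPt z)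

/-- Triangle of type `T³`. -/
def IsT3 (S : Set Pt) : Prop :=
  ∃ v0 v1 v2 : Pt, AffineIndependent ℝ ![v0, v1, v2] ∧
    ¬ IsIntPt v0 ∧ ¬ IsIntPt v1 ∧ ¬ IsIntPt v2 ∧
    S = convexHull ℝ {v0, v1, v2} ∧
    (∃! z, z ∈ openSegment ℝ v0 v1 ∧ IsIntPt z) ∧
    (∃! z, z ∈ openSegment ℝ v1 v2 ∧ IsIntPt z) ∧
    (∃! z, z ∈ openSegment ℝ v0 v2 ∧ IsIntPt z) ∧
    (∀ z, IsIntPt z → z ∈ frontier S →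
      z ∈ openSegment ℝ v0 v1 ∨ z ∈ openSegment ℝ v1 v2 ∨ z ∈ openSegment ℝ v0 v2)

/-- A quadrilateral with vertices `v 0, v 1, v 2, v 3` in cyclic order; each `vᵢ`
is an extreme point of the hull and each side lies on the boundary. -/
def IsQuadWith (S : Set Pt) (v : Fin 4 → Pt) : Prop :=
  S = convexHull ℝ (Set.range v) ∧
  (∀ i, v i ∈ Set.extremePoints ℝ S) ∧
  (∀ i : Fin 4, segment ℝ (v i) (v (i + 1)) ⊆ frontier S)

/-- Quadrilateral of type `Q¹`. -/
def IsQ1 (S : Set Pt) : Prop :=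
  ∃ v : Fin 4 → Pt, IsQuadWith S v ∧
    (∃ z1 z2 : Pt, z1 ≠ z2 ∧ IsIntPt z1 ∧ IsIntPt z2 ∧
      z1 ∈ segment ℝ (v 0) (v 1) ∧ z2 ∈ segment ℝ (v 0) (v 1)) ∧
    (∃ j : Fin 4, j ≠ 0 ∧
      (∀ i : Fin 4, i ≠ 0 → i ≠ j → ∃ z, IsIntPt z ∧ z ∈ segment ℝ (v i) (v (i + 1))) ∧
      (∀ z ∈ openSegment ℝ (v j) (v (j + 1)), ¬ IsIntPt z)) ∧
    (∃ T : Set Pt, (IsT1 T ∨ IsT2A T) ∧ S ⊆ T)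

/-- Quadrilateral of type `Q²`. -/
def IsQ2 (S : Set Pt) : Prop :=
  ∃ v : Fin 4 → Pt, IsQuadWith S v ∧ (∀ i, ¬ IsIntPt (v i)) ∧
    ∀ i : Fin 4, ∃! z, z ∈ openSegment ℝ (v i) (v (i + 1)) ∧ IsIntPt z

/-!
If the two rays are parallel, the relaxation projects to a part of a single lattice line, and one
split at the coordinate of `f` along that line suffices.

If they are independent, `P(R,f)` is contained in the sum of finitely many of its points and the
recession cone, so the facet contains two lattice points `z` and `z + g • d`, with `d` a primitive
integral vector. No lattice point of the relaxation violates the inequality; in particular the next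
lattice line below the facet line meets it in a segment strictly between two consecutive lattice
points. A suitable split therefore lifts the first closure strictly above that line, and the split
along `d` between the two lines then proves the inequality.
-/

/-- The planar cross product `x₀ y₁ - x₁ y₀`. For integral `w` the forms `areaForm w` are exactly
the forms `x ↦ π · x` with `π ∈ ℤ²`, so splits are described by integral vectors `w` throughout. -/
noncomputable def areaForm : Pt →ₗ[ℝ] Pt →ₗ[ℝ] ℝ :=
  LinearMap.mk₂ ℝ (fun x y => x 0 * y 1 - x 1 * y 0)
    (fun x x' y => by simp only [Pi.add_apply]; ring)
    (fun c x y => by simp only [Pi.smul_apply, smul_eq_mul]; ring)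
    (fun x y y' => by simp only [Pi.add_apply]; ring)
    (fun c x y => by simp only [Pi.smul_apply, smul_eq_mul]; ring)

theorem areaForm_apply (x y : Pt) : areaForm x y = x 0 * y 1 - x 1 * y 0 := rfl

@[simp]
theorem areaForm_self (x : Pt) : areaForm x x = 0 := by
  rw [areaForm_apply, mul_comm, sub_self]

theorem areaForm_swap (x y : Pt) : areaForm y x = -areaForm x y := by
  simp only [areaForm_apply]; ring

theorem exists_eq_smul_of_areaForm_eq_zero {a b : Pt} (ha : a ≠ 0) (h : areaForm a b = 0) :
    ∃ c : ℝ, b = c • a := by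
  have hnorm : a ⬝ᵥ a ≠ 0 := dotProduct_self_eq_zero.not.2 ha
  refine ⟨(a ⬝ᵥ b) / (a ⬝ᵥ a), funext fun j => ?_⟩
  rw [Pi.smul_apply, smul_eq_mul, div_mul_eq_mul_div, eq_div_iff hnorm]
  rw [areaForm_apply] at h
  fin_cases j <;> simp only [dotProduct, Fin.sum_univ_two, Fin.zero_eta, Fin.mk_one]
  · linear_combination -a 1 * h
  · linear_combination a 0 * h

namespace IsIntPt

variable {x y : Pt}

theorem add (hx : IsIntPt x) (hy : IsIntPt y) : IsIntPt (x + y) := fun j => by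
  obtain ⟨m, hm⟩ := hx j
  obtain ⟨n, hn⟩ := hy j
  exact ⟨m + n, by simp [hm, hn]⟩

theorem intCast_smul (n : ℤ) (hx : IsIntPt x) : IsIntPt ((n : ℝ) • x) := fun j => by
  obtain ⟨m, hm⟩ := hx j
  exact ⟨n * m, by simp [hm]⟩

theorem sub (hx : IsIntPt x) (hy : IsIntPt y) : IsIntPt (x - y) := by
  simpa [sub_eq_add_neg] using hx.add (hy.intCast_smul (-1))

theorem exists_areaForm_eq (hx : IsIntPt x) (hy : IsIntPt y) : ∃ n : ℤ, areaForm x y = n := by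
  choose m hm using hx
  choose n hn using hy
  exact ⟨m 0 * n 1 - m 1 * n 0, by simp [areaForm_apply, hm, hn]⟩

end IsIntPt

theorem exists_nat_forall_isIntPt_smul {ι : Type*} [Finite ι] {r : ι → Pt}
    (hr : ∀ i, IsRatPt (r i)) : ∃ N : ℕ, 0 < N ∧ ∀ i, IsIntPt ((N : ℝ) • r i) := by
  have := Fintype.ofFinite ι
  choose q hq using hr
  refine ⟨∏ i, ∏ j, (q i j).den,
    Finset.prod_pos fun i _ => Finset.prod_pos fun j _ => (q i j).den_pos, fun i j => ?_⟩
  obtain ⟨m, hm⟩ : (q i j).den ∣ ∏ i, ∏ j, (q i j).den :=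
    (Finset.dvd_prod_of_mem _ (Finset.mem_univ j)).trans
      (Finset.dvd_prod_of_mem (fun i => ∏ j, (q i j).den) (Finset.mem_univ i))
  refine ⟨(q i j).num * m, ?_⟩
  rw [Pi.smul_apply, smul_eq_mul, hq, hm]
  exact_mod_cast show (((q i j).den * m : ℕ) : ℚ) * q i j = (q i j).num * m by
    rw [Nat.cast_mul, mul_right_comm, Rat.den_mul_eq_num]

/-- `(e, d)` is a positively oriented basis of the lattice `ℤ²`; the coordinates of `x` in it are
`areaForm e x` along `d` and `-areaForm d x` along `e`. -/
structure IsLatticeBasis (e d : Pt) : Prop where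
  isIntPt_left : IsIntPt e
  isIntPt_right : IsIntPt d
  areaForm_eq_one : areaForm e d = 1

namespace IsLatticeBasis

variable {e d : Pt}

theorem eq_smul_sub_smul (h : IsLatticeBasis e d) (x : Pt) :
    x = areaForm e x • d - areaForm d x • e := by
  have hed := h.areaForm_eq_one
  ext j
  simp only [areaForm_apply, Pi.sub_apply, Pi.smul_apply, smul_eq_mul] at hed ⊢
  fin_cases j <;> simp only [Fin.zero_eta, Fin.mk_one]
  · linear_combination -x 0 * hed
  · linear_combination -x 1 * hed

theorem isIntPt_of_areaForm_eq (h : IsLatticeBasis e d) {x : Pt} {m n : ℤ}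
    (hm : areaForm e x = m) (hn : areaForm d x = n) : IsIntPt x := by
  rw [h.eq_smul_sub_smul x, hm, hn]
  exact (h.isIntPt_right.intCast_smul m).sub (h.isIntPt_left.intCast_smul n)

end IsLatticeBasis

theorem IsIntPt.exists_isLatticeBasis {v : Pt} (hv : IsIntPt v) (hv0 : v ≠ 0) :
    ∃ e d : Pt, IsLatticeBasis e d ∧ ∃ g : ℝ, 1 ≤ g ∧ v = g • d := by
  choose z hz using hv
  have hz0 : z 0 ≠ 0 ∨ z 1 ≠ 0 := by
    by_contra! h
    exact hv0 (funext fun j => by fin_cases j <;> simp [hz, h])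
  obtain ⟨g, m, n, hg, hmn, h0, h1⟩ := Int.exists_gcd_one' (Int.gcd_pos_iff.2 hz0)
  obtain ⟨u, w, huw⟩ := Int.isCoprime_iff_gcd_eq_one.2 hmn
  refine ⟨![w, -u], ![m, n], ⟨?_, ?_, ?_⟩, g, by exact_mod_cast hg, ?_⟩
  · exact Fin.forall_fin_two.2 ⟨⟨w, rfl⟩, ⟨-u, by simp⟩⟩
  · exact Fin.forall_fin_two.2 ⟨⟨m, rfl⟩, ⟨n, rfl⟩⟩
  · rw [areaForm_apply]
    simp only [Matrix.cons_val_zero, Matrix.cons_val_one]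
    exact_mod_cast (by linear_combination huw : w * n - -u * m = 1)
  · ext j
    fin_cases j
    · simp [hz, h0, mul_comm]
    · simp [hz, h1, mul_comm]

theorem exists_isLatticeBasis_forall_areaForm_eq_zero {ι : Type*} {r : ι → Pt}
    (hr : ∀ i, IsRatPt (r i)) (hpar : ∀ i j, areaForm (r i) (r j) = 0) :
    ∃ e d : Pt, IsLatticeBasis e d ∧ ∀ i, areaForm d (r i) = 0 := by
  by_cases h0 : ∀ i, r i = 0
  · have hint : ∀ a b : ℤ, IsIntPt ![(a : ℝ), b] := fun a b =>
      Fin.forall_fin_two.2 ⟨⟨a, rfl⟩, ⟨b, rfl⟩⟩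
    exact ⟨_, _, ⟨hint 1 0, hint 0 1, by simp [areaForm_apply]⟩, fun i => by simp [h0]⟩
  · push Not at h0
    obtain ⟨i, hi⟩ := h0
    obtain ⟨N, hN, hNr⟩ := exists_nat_forall_isIntPt_smul fun _ : Unit => hr i
    have hN0 : (N : ℝ) ≠ 0 := by exact_mod_cast hN.ne'
    obtain ⟨e, d, hed, g, hg, hgd⟩ := (hNr ()).exists_isLatticeBasis (smul_ne_zero hN0 hi)
    refine ⟨e, d, hed, fun j => ?_⟩
    have : g * areaForm d (r j) = N * areaForm (r i) (r j) := by
      simpa using congrArg (areaForm · (r j)) hgd.symm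
    rw [hpar, mul_zero] at this
    exact (mul_eq_zero.1 this).resolve_left (by positivity)

theorem exists_int_subset_Ioo {s : Set ℝ} (hs : s.OrdConnected) (hint : ∀ n : ℤ, (n : ℝ) ∉ s) :
    ∃ a : ℤ, s ⊆ Ioo (a : ℝ) (a + 1) := by
  obtain rfl | ⟨t, ht⟩ := s.eq_empty_or_nonempty
  · exact ⟨0, empty_subset _⟩
  refine ⟨⌊t⌋, fun x hx => ⟨?_, ?_⟩⟩ <;> by_contra! hle
  · exact hint ⌊t⌋ (hs.out hx ht ⟨hle, Int.floor_le t⟩)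
  · refine hint (⌊t⌋ + 1) (hs.out ht hx ⟨?_, ?_⟩) <;> push_cast
    · exact (Int.lt_floor_add_one t).le
    · exact hle

theorem exists_int_mem_segment_of_floor (t u : ℝ) (h : u ≤ ⌊t⌋ ∨ ⌊t⌋ + 1 ≤ u) :
    ∃ n : ℤ, (n : ℝ) ∈ segment ℝ t u := by
  simp only [segment_eq_uIcc]
  rcases h with h | h
  · exact ⟨⌊t⌋, mem_uIcc_of_ge h (Int.floor_le t)⟩
  · exact ⟨⌊t⌋ + 1, mem_uIcc_of_le (by exact_mod_cast (Int.lt_floor_add_one t).le)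
      (by exact_mod_cast h)⟩

section AdjacentLatticePoints

variable {K : Set Pt} {z e d : Pt}

theorem exists_int_slice_subset_Ioo (hK : Convex ℝ K) (hed : IsLatticeBasis e d) (hz : IsIntPt z)
    (hno : ∀ x ∈ K, IsIntPt x → areaForm d (x - z) ≠ -1) :
    ∃ a : ℤ, ∀ x ∈ K, areaForm d (x - z) = -1 → areaForm e (x - z) ∈ Ioo (a : ℝ) (a + 1) := by
  have hslice : Convex ℝ (K ∩ {x | areaForm d x = areaForm d z - 1}) :=
    hK.inter (convex_hyperplane (areaForm d).isLinear _)
  obtain ⟨a, ha⟩ := exists_int_subset_Ioo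
    ((hslice.translate (-z)).linear_image (areaForm e)).ordConnected (by
      rintro n ⟨_, ⟨x, ⟨hx, hdx⟩, rfl⟩, hn⟩
      replace hn : areaForm e (x - z) = n := by rw [← hn, ← neg_add_eq_sub z x]
      have hdx' : areaForm d (x - z) = -1 := by rw [map_sub, hdx]; ring
      refine hno x hx ?_ hdx'
      simpa using (hed.isIntPt_of_areaForm_eq (n := -1) hn (by simpa using hdx')).add hz)
  refine ⟨a, fun x hx hdx => ha ⟨x - z, ⟨x, ⟨hx, ?_⟩, neg_add_eq_sub z x⟩, rfl⟩⟩
  rw [map_sub] at hdx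
  rw [mem_ofPred_eq]
  linarith

/-- The slice of `K` on the lattice line through `z + e` lies strictly between consecutive lattice
points `z + e + a • d` and `z + e + (a + 1) • d`. Splitting along `e + a • d`, the segments joining
`z` and `z + d` to a point of `K` beyond that line would cross it outside this gap. -/
theorem exists_split_of_adjacent (hK : Convex ℝ K) (hed : IsLatticeBasis e d) (hz : IsIntPt z)
    (hzK : z ∈ K) (hzdK : z + d ∈ K) (hno : ∀ x ∈ K, IsIntPt x → areaForm d (x - z) ≠ -1) :
    ∃ w, IsIntPt w ∧ ∃ n : ℤ, ∀ x ∈ K,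
      areaForm w x ≤ n ∨ n + 1 ≤ areaForm w x → -1 < areaForm d (x - z) := by
  obtain ⟨a, ha⟩ := exists_int_slice_subset_Ioo hK hed hz hno
  have hw : IsIntPt (e + (a : ℝ) • d) := hed.isIntPt_left.add (hed.isIntPt_right.intCast_smul a)
  obtain ⟨n, hn⟩ := hw.exists_areaForm_eq hz
  refine ⟨_, hw, n, fun x hx hsplit => ?_⟩
  by_contra! hlow
  have hform : areaForm (e + (a : ℝ) • d) x
      = n + areaForm e (x - z) + a * areaForm d (x - z) := by
    simp only [← hn, map_add, map_sub, map_smul, LinearMap.add_apply, LinearMap.smul_apply,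
      smul_eq_mul]
    ring
  rw [hform] at hsplit
  obtain ⟨t, ht, htd⟩ : ∃ t ∈ Icc (0 : ℝ) 1, t * areaForm d (x - z) = -1 :=
    ⟨(-areaForm d (x - z))⁻¹, ⟨inv_nonneg.2 (by linarith), inv_le_one_of_one_le₀ (by linarith)⟩,
      by rw [inv_neg, neg_mul, inv_mul_cancel₀ (by linarith)]⟩
  rcases hsplit with hs | hs
  · have hgap := (ha _ (hK.add_smul_sub_mem hzK hx ht) (by simpa using htd)).1
    rw [add_sub_cancel_left, map_smul, smul_eq_mul] at hgap
    refine hgap.not_ge ?_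
    linear_combination mul_le_mul_of_nonneg_left hs ht.1 - a * htd
  · have hsub : z + d + t • (x - (z + d)) - z = d + t • (x - z - d) := by module
    have hgap := (ha _ (hK.add_smul_sub_mem hzdK hx ht) (by
      rw [hsub]; simpa using htd)).2
    rw [hsub] at hgap
    simp only [map_add, map_sub _ _ d, map_smul, hed.areaForm_eq_one, smul_eq_mul] at hgap
    refine hgap.not_ge ?_
    linear_combination mul_le_mul_of_nonneg_left hs ht.1 + a * htd

end AdjacentLatticePoints

theorem mem_convexHull_setOf_eq_of_le {E : Type*} [AddCommGroup E] [Module ℝ E] {φ : E →ₗ[ℝ] ℝ}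
    {B : Set E} {γ : ℝ} (hB : ∀ b ∈ B, γ ≤ φ b) {x : E} (hx : x ∈ convexHull ℝ B)
    (hxγ : φ x ≤ γ) : x ∈ convexHull ℝ {b ∈ B | φ b = γ} := by
  have hconv : Convex ℝ {y | γ ≤ φ y ∧ (φ y = γ → y ∈ convexHull ℝ {b ∈ B | φ b = γ})} := by
    refine convex_iff_forall_pos.2 fun y ⟨hy, hy'⟩ z ⟨hz, hz'⟩ s t hs ht hst => ⟨?_, fun h => ?_⟩
    · exact convex_halfSpace_ge φ.isLinear γ hy hz hs.le ht.le hst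
    · have hsum : s * (φ y - γ) + t * (φ z - γ) = 0 := by
        simp only [map_add, map_smul, smul_eq_mul] at h
        linear_combination h - γ * hst
      obtain ⟨hsy, htz⟩ := (add_eq_zero_iff_of_nonneg (mul_nonneg hs.le (sub_nonneg.2 hy))
        (mul_nonneg ht.le (sub_nonneg.2 hz))).1 hsum
      exact convex_convexHull ℝ _
        (hy' (sub_eq_zero.1 ((mul_eq_zero.1 hsy).resolve_left hs.ne')))
        (hz' (sub_eq_zero.1 ((mul_eq_zero.1 htz).resolve_left ht.ne'))) hs.le ht.le hst
  have hsub : B ⊆ {y | γ ≤ φ y ∧ (φ y = γ → y ∈ convexHull ℝ {b ∈ B | φ b = γ})} :=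
    fun b hb => ⟨hB b hb, fun h => subset_convexHull ℝ _ ⟨hb, h⟩⟩
  have hxmem := convexHull_min hsub hconv hx
  exact hxmem.2 (hxγ.antisymm hxmem.1)

theorem exists_finite_subset_forall_exists_le {ι β : Type*} [PartialOrder β]
    [WellQuasiOrderedLE β] (S : Set ι) (φ : ι → β) :
    ∃ B ⊆ S, B.Finite ∧ ∀ p ∈ S, ∃ b ∈ B, φ b ≤ φ p := by
  have hfin : {n | Minimal (· ∈ φ '' S) n}.Finite :=
    WellQuasiOrderedLE.finite_of_isAntichain (setOfPred_minimal_antichain _)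
  obtain ⟨B, hBS, hB, hle⟩ := exists_subset_image_finite_and
    (p := fun T => ∀ p ∈ S, ∃ n ∈ T, n ≤ φ p).1 ⟨_, fun n hn => hn.prop, hfin, fun p hp =>
      (exists_minimal_le_of_wellFoundedLT (· ∈ φ '' S) (φ p) (mem_image_of_mem φ hp)).imp
        fun _ h => h.symm⟩
  exact ⟨B, hBS, hB, fun p hp => exists_mem_image.1 (hle p hp)⟩

theorem affDim_eq_zero_of_subsingleton {V : Type*} [AddCommGroup V] [Module ℝ V] {S : Set V}
    (hS : S.Subsingleton) : affDim S = 0 := by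
  rw [affDim, direction_affineSpan, vectorSpan_of_subsingleton ℝ hS, finrank_bot]

section SplitClosure

variable {k : ℕ} {C D : Set (Pt × (Fin k → ℝ))}

theorem splitClosure_subset_of_areaForm (hD : Convex ℝ D) {w : Pt} (hw : IsIntPt w) (n : ℤ)
    (h : ∀ p ∈ C, areaForm w p.1 ≤ n ∨ n + 1 ≤ areaForm w p.1 → p ∈ D) :
    splitClosure k C ⊆ D := by
  choose m hm using hw
  have hform : ∀ x : Pt, ∑ j, ((![-m 1, m 0] j : ℤ) : ℝ) * x j = areaForm w x := fun x => by
    simp only [Fin.sum_univ_two, Matrix.cons_val_zero, Matrix.cons_val_one, areaForm_apply, hm]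
    push_cast
    ring
  refine (iInter₂_subset ![-m 1, m 0] n).trans (convexHull_min ?_ hD)
  simp only [hform]
  rintro p (⟨hp, hle⟩ | ⟨hp, hge⟩)
  · exact h p hp (Or.inl hle)
  · exact h p hp (Or.inr hge)

theorem splitClosure_subset (hD : Convex ℝ D) (hCD : C ⊆ D) : splitClosure k C ⊆ D :=
  splitClosure_subset_of_areaForm (w := 0) hD (fun _ => ⟨0, by simp⟩) 0 fun _ hp _ => hCD hp

theorem splitClosure_splitClosure_subset (hC : Convex ℝ C) {z e d : Pt}
    (hed : IsLatticeBasis e d) (hz : IsIntPt z) (hzC : z ∈ Prod.fst '' C)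
    (hzdC : z + d ∈ Prod.fst '' C)
    (hno : ∀ x ∈ Prod.fst '' C, IsIntPt x → areaForm d (x - z) ≠ -1) :
    splitClosure k (splitClosure k C) ⊆ {p | 0 ≤ areaForm d (p.1 - z)} := by
  have hK : Convex ℝ (Prod.fst '' C) := hC.linear_image (LinearMap.fst ℝ Pt (Fin k → ℝ))
  let height : Pt × (Fin k → ℝ) →ₗ[ℝ] ℝ := areaForm d ∘ₗ LinearMap.fst ℝ Pt (Fin k → ℝ)
  have hheight : ∀ p, areaForm d (p.1 - z) = height p - areaForm d z := fun p => map_sub _ _ _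
  obtain ⟨w, hw, n, hsplit⟩ := exists_split_of_adjacent hK hed hz hzC hzdC hno
  have hfirst : splitClosure k C ⊆ {p | areaForm d z - 1 < height p} := by
    refine splitClosure_subset_of_areaForm (convex_halfSpace_gt height.isLinear _) hw n
      fun p hp hs => ?_
    have := hsplit p.1 (mem_image_of_mem _ hp) hs
    rw [hheight] at this
    rw [mem_ofPred_eq]
    linarith
  obtain ⟨m, hm⟩ := hed.isIntPt_right.exists_areaForm_eq hz
  simp only [hheight, sub_nonneg]
  refine splitClosure_subset_of_areaForm (convex_halfSpace_ge height.isLinear _)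
    hed.isIntPt_right (m - 1) fun p hp hs => ?_
  have hlow : areaForm d z - 1 < areaForm d p.1 := hfirst hp
  change areaForm d z ≤ areaForm d p.1
  rw [hm] at hlow ⊢
  push_cast at hs
  rcases hs with hs | hs <;> linarith

end SplitClosure

/-- The left-hand side `∑ αᵢ sᵢ` of an inequality, as a linear form in `(x, s)`. -/
def rayForm {k : ℕ} (α : Fin k → ℝ) : Pt × (Fin k → ℝ) →ₗ[ℝ] ℝ where
  toFun p := ∑ i, α i * p.2 i
  map_add' p q := by simp [mul_add, Finset.sum_add_distrib]
  map_smul' c p := by simp [Finset.mul_sum, mul_left_comm]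

theorem rayForm_apply {k : ℕ} (α : Fin k → ℝ) (p : Pt × (Fin k → ℝ)) :
    rayForm α p = ∑ i, α i * p.2 i := rfl

/-- The displacement `(∑ sᵢ rⁱ, s)` caused by the ray coefficients `s`. -/
noncomputable def rayLift {k : ℕ} (r : Fin k → Pt) : (Fin k → ℝ) →ₗ[ℝ] Pt × (Fin k → ℝ) :=
  (Fintype.linearCombination ℝ r).prod LinearMap.id

section Rays

variable {k : ℕ} {r : Fin k → Pt} {f : Pt} {α : Fin k → ℝ} {γ : ℝ} {p q : Pt × (Fin k → ℝ)}

theorem rayLift_apply_fst (s : Fin k → ℝ) : (rayLift r s).1 = ∑ i, s i • r i :=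
  Fintype.linearCombination_apply ℝ r s

@[simp]
theorem rayLift_apply_snd (s : Fin k → ℝ) : (rayLift r s).2 = s := rfl

theorem rayLift_single_fst (i : Fin k) (t : ℝ) : (rayLift r (Pi.single i t)).1 = t • r i :=
  Fintype.linearCombination_apply_single ℝ r i t

theorem rayForm_rayLift_single (i : Fin k) (t : ℝ) :
    rayForm α (rayLift r (Pi.single i t)) = α i * t := by
  simp [rayForm_apply, Pi.single_apply]

theorem mem_relaxP_iff : p ∈ relaxP k r f ↔ 0 ≤ p.2 ∧ p = (f, 0) + rayLift r p.2 := by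
  simp [relaxP, Prod.ext_iff, rayLift_apply_fst, Pi.le_def]

theorem relaxP_eq_inter : relaxP k r f = LinearMap.snd ℝ Pt (Fin k → ℝ) ⁻¹' Ici 0 ∩
    {p | (LinearMap.fst ℝ Pt (Fin k → ℝ) -
      Fintype.linearCombination ℝ r ∘ₗ LinearMap.snd ℝ Pt (Fin k → ℝ)) p = f} := by
  ext p
  simp [relaxP, Pi.le_def, sub_eq_iff_eq_add, Fintype.linearCombination_apply]

theorem convex_relaxP : Convex ℝ (relaxP k r f) := by
  rw [relaxP_eq_inter]
  exact ((convex_Ici 0).linear_preimage _).inter (convex_hyperplane (LinearMap.isLinear _) f)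

theorem closures_subset_relaxP (n : ℕ) : closures k r f n ⊆ relaxP k r f := by
  induction n with
  | zero => exact Subset.rfl
  | succ n ih => exact splitClosure_subset convex_relaxP ih

theorem isClosed_relaxP : IsClosed (relaxP k r f) := by
  rw [relaxP_eq_inter]
  exact (isClosed_Ici.preimage (LinearMap.continuous_of_finiteDimensional _)).inter
    (isClosed_eq (LinearMap.continuous_of_finiteDimensional _) continuous_const)

theorem sub_eq_rayLift_of_mem_relaxP (hp : p ∈ relaxP k r f) (hq : q ∈ relaxP k r f) :
    q - p = rayLift r (q.2 - p.2) := by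
  rw [map_sub, (mem_relaxP_iff.1 hp).2, (mem_relaxP_iff.1 hq).2]
  simp

theorem sub_mem_relaxP_zero (hp : p ∈ relaxP k r f) (hq : q ∈ relaxP k r f) (hpq : p.2 ≤ q.2) :
    q - p ∈ relaxP k r 0 :=
  mem_relaxP_iff.2 ⟨sub_nonneg.2 hpq, by
    rw [sub_eq_rayLift_of_mem_relaxP hp hq, rayLift_apply_snd, Prod.mk_zero_zero, zero_add]⟩

theorem rayForm_nonneg (hα : ∀ i, 0 ≤ α i) (hp : p ∈ relaxP k r f) : 0 ≤ rayForm α p := by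
  rw [rayForm_apply]
  exact Finset.sum_nonneg fun i _ => mul_nonneg (hα i) (hp.1 i)

theorem add_rayLift_mem_mixedP (hp : p ∈ mixedP k r f) {s : Fin k → ℝ} (hs : 0 ≤ s)
    (hint : IsIntPt (rayLift r s).1) : p + rayLift r s ∈ mixedP k r f := by
  refine ⟨hp.1.add hint, fun i => add_nonneg (hp.2.1 i) (hs i), ?_⟩
  simp only [Prod.fst_add, Prod.snd_add, rayLift_apply_snd, Pi.add_apply, add_smul,
    Finset.sum_add_distrib, rayLift_apply_fst, ← add_assoc, ← hp.2.2]

theorem exists_nat_forall_add_rayLift_mem_mixedP (hr : ∀ i, IsRatPt (r i)) :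
    ∃ N : ℕ, 0 < N ∧ ∀ p ∈ mixedP k r f, ∀ i, ∀ m : ℕ,
      p + rayLift r (Pi.single i (m * N : ℝ)) ∈ mixedP k r f := by
  obtain ⟨N, hN, hNr⟩ := exists_nat_forall_isIntPt_smul hr
  refine ⟨N, hN, fun p hp i m =>
    add_rayLift_mem_mixedP hp (Pi.single_nonneg.2 (by positivity)) ?_⟩
  rw [rayLift_single_fst, mul_smul]
  exact_mod_cast (hNr i).intCast_smul m

theorem ValidIneq.nonneg (hvalid : ValidIneq k r f α γ) (hr : ∀ i, IsRatPt (r i))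
    (hne : (mixedP k r f).Nonempty) (i : Fin k) : 0 ≤ α i := by
  obtain ⟨N, hN, hadd⟩ := exists_nat_forall_add_rayLift_mem_mixedP (f := f) hr
  obtain ⟨p, hp⟩ := hne
  by_contra! hneg
  have hNR : (0 : ℝ) < N := by exact_mod_cast hN
  obtain ⟨m, hm⟩ := exists_nat_gt ((rayForm α p - γ) / (-α i * N))
  have hγ : γ ≤ rayForm α (p + rayLift r (Pi.single i (m * N : ℝ))) := hvalid _ (hadd p hp i m)
  rw [map_add, rayForm_rayLift_single] at hγ
  rw [div_lt_iff₀ (mul_pos (neg_pos.2 hneg) hNR)] at hm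
  linarith

theorem ValidIneq.le_of_isIntPt_mem_segment (hvalid : ValidIneq k r f α γ) (hα : ∀ i, 0 ≤ α i)
    (hp : p ∈ relaxP k r f) {x : Pt} (hxp : x ∈ segment ℝ f p.1) (hx : IsIntPt x) :
    γ ≤ rayForm α p := by
  have hf : (f, 0) ∈ relaxP k r f := mem_relaxP_iff.2 (by simp)
  obtain ⟨s, t, hs, ht, hst, rfl⟩ := hxp
  have hγ : γ ≤ rayForm α (s • (f, 0) + t • p) :=
    hvalid _ ⟨hx, convex_relaxP hf hp hs ht hst⟩
  refine hγ.trans ?_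
  have hzero : rayForm α (f, 0) = 0 := by simp [rayForm_apply]
  rw [map_add, map_smul, map_smul, hzero, smul_zero, zero_add, smul_eq_mul]
  exact mul_le_of_le_one_left (rayForm_nonneg hα hp) (by linarith)

theorem splitRank_le {n : ℕ} (h : closures k r f n ⊆ {p | γ ≤ rayForm α p}) :
    splitRank k r f α γ ≤ n :=
  sInf_le ⟨n, rfl, h⟩

/-- All points of `P(R,f)⁰` lie on one lattice line; a split at the coordinate of `f` along it
leaves only points separated from `f` by a lattice point. -/
theorem splitRank_le_one_of_areaForm_eq_zero {e d : Pt} (hed : IsLatticeBasis e d)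
    (hline : ∀ i, areaForm d (r i) = 0) (hne : (mixedP k r f).Nonempty) (hα : ∀ i, 0 ≤ α i)
    (hvalid : ValidIneq k r f α γ) : splitRank k r f α γ ≤ 1 := by
  obtain ⟨q, hq⟩ := hne
  have hconst : ∀ p ∈ relaxP k r f, areaForm d p.1 = areaForm d f := fun p hp => by
    simp [hp.2, hline]
  obtain ⟨m, hm⟩ := hed.isIntPt_right.exists_areaForm_eq hq.1
  rw [hconst q hq.2] at hm
  refine splitRank_le (n := 1) (splitClosure_subset_of_areaForm
    (convex_halfSpace_ge (rayForm α).isLinear γ) hed.isIntPt_left ⌊areaForm e f⌋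
    fun p hp hsplit => ?_)
  obtain ⟨n, hn⟩ := exists_int_mem_segment_of_floor _ _ hsplit
  obtain ⟨x, hxp, hxn⟩ := (image_segment ℝ (areaForm e).toAffineMap f p.1).ge hn
  have hxm : areaForm d x = m := by
    obtain ⟨s, t, -, -, hst, rfl⟩ := hxp
    rw [map_add, map_smul, map_smul, hconst p hp, hm, ← add_smul, hst, one_smul]
  exact hvalid.le_of_isIntPt_mem_segment hα hp hxp (hed.isIntPt_of_areaForm_eq hxn hxm)

theorem le_affDim_convexHull_mixedP (hr : ∀ i, IsRatPt (r i)) (hne : (mixedP k r f).Nonempty) :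
    k ≤ affDim (convexHull ℝ (mixedP k r f)) := by
  obtain ⟨p, hp⟩ := hne
  obtain ⟨N, hN, hadd⟩ := exists_nat_forall_add_rayLift_mem_mixedP (f := f) hr
  have hN0 : ((1 : ℕ) * N : ℝ) ≠ 0 := by simpa using hN.ne'
  have hle : LinearMap.range (rayLift r) ≤ vectorSpan ℝ (mixedP k r f) := by
    rw [LinearMap.range_eq_map, ← (Pi.basisFun ℝ (Fin k)).span_eq, Submodule.map_span_le]
    rintro _ ⟨i, rfl⟩
    rw [Pi.basisFun_apply, ← Submodule.smul_mem_iff _ hN0, ← map_smul, ← Pi.single_smul,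
      smul_eq_mul, mul_one]
    simpa only [vsub_eq_sub, add_sub_cancel_left] using
      vsub_mem_vectorSpan ℝ (hadd p hp i 1) hp
  have hinj : Function.Injective (rayLift r) := fun _ _ h => congrArg Prod.snd h
  calc k = Module.finrank ℝ (Fin k → ℝ) := Module.finrank_fin_fun ℝ |>.symm
    _ = Module.finrank ℝ (LinearMap.range (rayLift r)) :=
      (LinearMap.finrank_range_of_inj hinj).symm
    _ ≤ Module.finrank ℝ (vectorSpan ℝ (mixedP k r f)) := Submodule.finrank_mono hle
    _ = affDim (convexHull ℝ (mixedP k r f)) := by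
      rw [affDim, affineSpan_convexHull, direction_affineSpan]

theorem IsFacet.nonempty_mixedP (hfacet : IsFacet k r f α γ) : (mixedP k r f).Nonempty := by
  by_contra! hempty
  have hdim := hfacet.2
  rw [hempty, convexHull_empty, affDim_eq_zero_of_subsingleton subsingleton_empty] at hdim
  exact absurd hdim (Nat.succ_ne_zero _)

theorem IsFacet.nontrivial_face (hfacet : IsFacet k r f α γ) (hr : ∀ i, IsRatPt (r i))
    (hk : 2 ≤ k) : {p ∈ closure (convexHull ℝ (mixedP k r f)) | rayForm α p = γ}.Nontrivial := by
  by_contra hF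
  have hdim : affDim {p ∈ closure (convexHull ℝ (mixedP k r f)) | rayForm α p = γ} + 1 =
      affDim (convexHull ℝ (mixedP k r f)) := hfacet.2
  rw [affDim_eq_zero_of_subsingleton (not_nontrivial_iff.1 hF)] at hdim
  have hle := le_affDim_convexHull_mixedP hr hfacet.nonempty_mixedP
  omega

theorem closure_convexHull_mixedP_subset {B : Set (Pt × (Fin k → ℝ))} (hB : B.Finite)
    (hgen : mixedP k r f ⊆ B + relaxP k r 0) :
    closure (convexHull ℝ (mixedP k r f)) ⊆ convexHull ℝ B + relaxP k r 0 :=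
  closure_minimal
    (convexHull_min (hgen.trans (add_subset_add_right (subset_convexHull ℝ B)))
      ((convex_convexHull ℝ B).add convex_relaxP))
    (isClosed_relaxP.add_left_of_isCompact (hB.isCompact_convexHull ℝ))

theorem face_subset_convexHull_add {B : Set (Pt × (Fin k → ℝ))} (hB : B.Finite)
    (hgen : mixedP k r f ⊆ B + relaxP k r 0) (hα : ∀ i, 0 ≤ α i) (hBγ : ∀ b ∈ B, γ ≤ rayForm α b) :
    {p ∈ closure (convexHull ℝ (mixedP k r f)) | rayForm α p = γ} ⊆
      convexHull ℝ {b ∈ B | rayForm α b = γ} + {c ∈ relaxP k r 0 | rayForm α c = 0} := by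
  rintro p ⟨hp, hpγ⟩
  obtain ⟨b, hb, c, hc, rfl⟩ := closure_convexHull_mixedP_subset hB hgen hp
  have hbγ : γ ≤ rayForm α b :=
    convexHull_min hBγ (convex_halfSpace_ge (rayForm α).isLinear γ) hb
  have hc0 := rayForm_nonneg hα hc
  rw [map_add] at hpγ
  exact add_mem_add (mem_convexHull_setOf_eq_of_le hBγ hb (by linarith)) ⟨hc, by linarith⟩

theorem eq_zero_of_rayForm_eq_zero (hα : ∀ i, 0 < α i) (hp : p ∈ relaxP k r 0)
    (h : rayForm α p = 0) : p = 0 := by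
  have hzero : ∀ i ∈ Finset.univ, α i * p.2 i = 0 :=
    (Finset.sum_eq_zero_iff_of_nonneg fun i _ => mul_nonneg (hα i).le (hp.1 i)).1 h
  have hp2 : p.2 = 0 :=
    funext fun i => (mul_eq_zero.1 (hzero i (Finset.mem_univ i))).resolve_left (hα i).ne'
  rw [(mem_relaxP_iff.1 hp).2, hp2, map_zero, add_zero, Prod.mk_zero_zero]

theorem pos_of_subsingleton_tight (hα : ∀ i, 0 ≤ α i) (hr : ∀ i, IsRatPt (r i))
    (hT : {p ∈ mixedP k r f | rayForm α p = γ}.Subsingleton)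
    (hp : p ∈ mixedP k r f) (hpγ : rayForm α p = γ) (i : Fin k) : 0 < α i := by
  refine (hα i).lt_of_ne' fun hi => ?_
  obtain ⟨N, hN, hadd⟩ := exists_nat_forall_add_rayLift_mem_mixedP (f := f) hr
  have htight : rayForm α (p + rayLift r (Pi.single i ((1 : ℕ) * N : ℝ))) = γ := by
    rw [map_add, rayForm_rayLift_single, hi, zero_mul, add_zero, hpγ]
  have hsnd := congrArg Prod.snd (hT ⟨hadd p hp i 1, htight⟩ ⟨hp, hpγ⟩)
  simp [hN.ne'] at hsnd

theorem IsFacet.nontrivial_tight (hfacet : IsFacet k r f α γ) (hr : ∀ i, IsRatPt (r i))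
    (hk : 2 ≤ k) {B : Set (Pt × (Fin k → ℝ))} (hBP : B ⊆ mixedP k r f) (hB : B.Finite)
    (hgen : mixedP k r f ⊆ B + relaxP k r 0) :
    {p ∈ mixedP k r f | rayForm α p = γ}.Nontrivial := by
  by_contra hT
  rw [not_nontrivial_iff] at hT
  have hα := hfacet.1.nonneg hr hfacet.nonempty_mixedP
  refine (hfacet.nontrivial_face hr hk).not_subsingleton (hT.anti fun x hx => ?_)
  obtain ⟨b, hb, c, ⟨hc, hcα⟩, rfl⟩ :=
    face_subset_convexHull_add hB hgen hα (fun b hb => hfacet.1 b (hBP hb)) hx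
  have hBT : {b ∈ B | rayForm α b = γ} ⊆ {p ∈ mixedP k r f | rayForm α p = γ} :=
    fun b hb => ⟨hBP hb.1, hb.2⟩
  have hbT := convexHull_min hBT hT.convex hb
  obtain rfl := eq_zero_of_rayForm_eq_zero
    (pos_of_subsingleton_tight hα hr hT hbT.1 hbT.2) hc hcα
  simpa using hbT

theorem areaForm_sub_eq_mul_rayForm_sub {v : Pt} {c : ℝ}
    (hv : ∀ i, areaForm v (r i) = c * α i) (hp : p ∈ relaxP k r f) (hq : q ∈ relaxP k r f) :
    areaForm v (q.1 - p.1) = c * (rayForm α q - rayForm α p) := by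
  simp only [hp.2, hq.2, add_sub_add_left_eq_sub, ← Finset.sum_sub_distrib, ← sub_smul, map_sum,
    map_smul, hv, rayForm_apply, Finset.mul_sum, smul_eq_mul]
  exact Finset.sum_congr rfl fun i _ => by ring

/-- The slack of the inequality is proportional to the height above the line through the tight
points `p` and `q`. -/
theorem splitRank_le_two_of_areaForm_eq (hvalid : ValidIneq k r f α γ) (hα : α ≠ 0)
    (hp : p ∈ mixedP k r f) (hq : q ∈ mixedP k r f) (hpγ : rayForm α p = γ) {c : ℝ} (hc : 0 < c)
    (hform : ∀ i, areaForm (q.1 - p.1) (r i) = c * α i) : splitRank k r f α γ ≤ 2 := by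
  have hpq : q.1 - p.1 ≠ 0 := fun h => hα (funext fun i => by simpa [h, hc.ne'] using hform i)
  obtain ⟨e, d, hed, g, hg, hgd⟩ := (hq.1.sub hp.1).exists_isLatticeBasis hpq
  have hg0 : 0 < g := by linarith
  have hd : ∀ i, areaForm d (r i) = c / g * α i := fun i => by
    have h := hform i
    rw [hgd, map_smul, LinearMap.smul_apply, smul_eq_mul] at h
    rw [div_mul_eq_mul_div, eq_div_iff hg0.ne', mul_comm, h]
  have hcg : 0 < c / g := div_pos hc hg0
  have hheight : ∀ x ∈ relaxP k r f, areaForm d (x.1 - p.1) = c / g * (rayForm α x - γ) :=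
    fun x hx => by rw [areaForm_sub_eq_mul_rayForm_sub hd hp.2 hx, hpγ]
  have hpdK : p.1 + d ∈ Prod.fst '' relaxP k r f := by
    have h := (convex_relaxP.linear_image (LinearMap.fst ℝ Pt (Fin k → ℝ))).add_smul_sub_mem
      (mem_image_of_mem _ hp.2) (mem_image_of_mem _ hq.2)
      ⟨inv_nonneg.2 hg0.le, inv_le_one_of_one_le₀ hg⟩
    rwa [LinearMap.fst_apply, LinearMap.fst_apply, hgd, inv_smul_smul₀ hg0.ne'] at h
  have hno : ∀ x ∈ Prod.fst '' relaxP k r f, IsIntPt x → areaForm d (x - p.1) ≠ -1 := by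
    rintro _ ⟨x, hx, rfl⟩ hint hx1
    have hxγ : γ ≤ rayForm α x := hvalid x ⟨hint, hx⟩
    have := mul_nonneg hcg.le (sub_nonneg.2 hxγ)
    rw [hheight x hx] at hx1
    linarith
  refine splitRank_le (n := 2) fun x hx => ?_
  have hx0 : 0 ≤ areaForm d (x.1 - p.1) := splitClosure_splitClosure_subset convex_relaxP hed hp.1
    (mem_image_of_mem _ hp.2) hpdK hno hx
  rw [hheight x (closures_subset_relaxP 2 hx)] at hx0
  exact sub_nonneg.1 (nonneg_of_mul_nonneg_right hx0 hcg)

/-- Rounding `M • s` down lands in `ℕᵏ`, where Dickson's lemma leaves finitely many minimal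
values; by discreteness comparing roundings is comparing the coefficients `s` themselves. -/
theorem exists_finite_mixedP_subset_add {M : ℝ} (hM : 0 < M)
    (hdiscrete : ∀ p ∈ mixedP k r f, ∀ q ∈ mixedP k r f, ∀ i, ∃ n : ℤ,
      M * (q.2 i - p.2 i) = n) :
    ∃ B ⊆ mixedP k r f, B.Finite ∧ mixedP k r f ⊆ B + relaxP k r 0 := by
  obtain ⟨B, hBP, hB, hle⟩ := exists_finite_subset_forall_exists_le (mixedP k r f)
    fun p i => ⌊M * p.2 i⌋₊
  refine ⟨B, hBP, hB, fun p hp => ?_⟩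
  obtain ⟨b, hb, hbp⟩ := hle p hp
  suffices hsnd : b.2 ≤ p.2 from
    ⟨b, hb, p - b, sub_mem_relaxP_zero (hBP hb).2 hp.2 hsnd, add_sub_cancel b p⟩
  intro i
  obtain ⟨n, hn⟩ := hdiscrete b (hBP hb) p hp i
  have hbfloor : M * b.2 i < ⌊M * b.2 i⌋₊ + 1 := Nat.lt_floor_add_one _
  have hpfloor : (⌊M * p.2 i⌋₊ : ℝ) ≤ M * p.2 i :=
    Nat.floor_le (mul_nonneg hM.le (hp.2.1 i))
  have hfloor : (⌊M * b.2 i⌋₊ : ℝ) ≤ ⌊M * p.2 i⌋₊ := by exact_mod_cast hbp i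
  have hn0 : 0 ≤ n := by
    have : (-1 : ℝ) < n := by linarith
    exact_mod_cast Int.le_of_sub_one_lt (by exact_mod_cast this)
  have hmul : 0 ≤ M * (p.2 i - b.2 i) := by rw [hn]; exact_mod_cast hn0
  exact sub_nonneg.1 (nonneg_of_mul_nonneg_right hmul hM)

end Rays

section TwoRays

variable {r : Fin 2 → Pt} {f : Pt} {α : Fin 2 → ℝ} {γ : ℝ} {p q : Pt × (Fin 2 → ℝ)}

theorem areaForm_sub_ray (hp : p ∈ relaxP 2 r f) (hq : q ∈ relaxP 2 r f) (i : Fin 2) :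
    areaForm (q.1 - p.1) (r i) =
      areaForm (r 0) (r 1) * ![p.2 1 - q.2 1, q.2 0 - p.2 0] i := by
  rw [hp.2, hq.2, add_sub_add_left_eq_sub, Fin.sum_univ_two, Fin.sum_univ_two]
  fin_cases i <;>
    simp only [areaForm_apply, Pi.sub_apply, Pi.add_apply, Pi.smul_apply, smul_eq_mul,
      Fin.zero_eta, Fin.mk_one, Matrix.cons_val_zero, Matrix.cons_val_one] <;>
    ring

theorem exists_pos_forall_exists_int_eq_mul_sub (hr : ∀ i, IsRatPt (r i))
    (hindep : areaForm (r 0) (r 1) ≠ 0) :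
    ∃ M : ℝ, 0 < M ∧ ∀ p ∈ mixedP 2 r f, ∀ q ∈ mixedP 2 r f, ∀ i, ∃ n : ℤ,
      M * (q.2 i - p.2 i) = n := by
  obtain ⟨N, hN, hNr⟩ := exists_nat_forall_isIntPt_smul hr
  have hint : ∀ p ∈ mixedP 2 r f, ∀ q ∈ mixedP 2 r f, ∀ i, ∃ n : ℤ,
      N * areaForm (r 0) (r 1) * (q.2 i - p.2 i) = n := by
    intro p hp q hq
    have hcross : ∀ i, ∃ n : ℤ, N * areaForm (q.1 - p.1) (r i) = n := fun i => by
      simpa only [map_smul, smul_eq_mul] using (hq.1.sub hp.1).exists_areaForm_eq (hNr i)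
    simp only [areaForm_sub_ray hp.2 hq.2] at hcross
    obtain ⟨m, hm⟩ := hcross 0
    obtain ⟨n, hn⟩ := hcross 1
    rw [Matrix.cons_val_zero] at hm
    rw [Matrix.cons_val_one, Matrix.cons_val_fin_one] at hn
    refine Fin.forall_fin_two.2 ⟨⟨n, by rw [mul_assoc, hn]⟩, ⟨-m, ?_⟩⟩
    push_cast
    linear_combination -hm
  refine ⟨|N * areaForm (r 0) (r 1)|, abs_pos.2 (mul_ne_zero (by exact_mod_cast hN.ne') hindep),
    fun p hp q hq i => ?_⟩
  obtain ⟨n, hn⟩ := hint p hp q hq i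
  rcases abs_choice (N * areaForm (r 0) (r 1)) with h | h <;> rw [h]
  · exact ⟨n, hn⟩
  · exact ⟨-n, by rw [neg_mul, hn, Int.cast_neg]⟩

theorem exists_ne_zero_areaForm_sub_eq_mul (hindep : areaForm (r 0) (r 1) ≠ 0) (hα : α ≠ 0)
    (hp : p ∈ relaxP 2 r f) (hq : q ∈ relaxP 2 r f) (hpq : p ≠ q)
    (heq : rayForm α p = rayForm α q) :
    ∃ c ≠ 0, ∀ i, areaForm (q.1 - p.1) (r i) = c * α i := by
  have horth : areaForm α ![p.2 1 - q.2 1, q.2 0 - p.2 0] = 0 := by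
    simp only [rayForm_apply, Fin.sum_univ_two] at heq
    simp only [areaForm_apply, Matrix.cons_val_zero, Matrix.cons_val_one]
    linear_combination -heq
  obtain ⟨c, hc⟩ := exists_eq_smul_of_areaForm_eq_zero hα horth
  refine ⟨areaForm (r 0) (r 1) * c, mul_ne_zero hindep fun hc0 => hpq ?_, fun i => by
    rw [areaForm_sub_ray hp hq, hc, Pi.smul_apply, smul_eq_mul, mul_assoc]⟩
  have hsnd : p.2 = q.2 := by
    rw [hc0, zero_smul] at hc
    exact funext <| Fin.forall_fin_two.2
      ⟨(sub_eq_zero.1 (congrFun hc 1)).symm, sub_eq_zero.1 (congrFun hc 0)⟩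
  rw [(mem_relaxP_iff.1 hp).2, (mem_relaxP_iff.1 hq).2, hsnd]

theorem splitRank_le_two_of_tight (hindep : areaForm (r 0) (r 1) ≠ 0)
    (hvalid : ValidIneq 2 r f α γ)
    (htight : {p ∈ mixedP 2 r f | rayForm α p = γ}.Nontrivial) : splitRank 2 r f α γ ≤ 2 := by
  obtain ⟨p, ⟨hp, hpγ⟩, q, ⟨hq, hqγ⟩, hpq⟩ := htight
  by_cases hα : α = 0
  · refine splitRank_le (n := 2) fun x _ => ?_
    simp [← hpγ, hα, rayForm_apply]
  obtain ⟨c, hc0, hc⟩ :=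
    exists_ne_zero_areaForm_sub_eq_mul hindep hα hp.2 hq.2 hpq (hpγ.trans hqγ.symm)
  rcases hc0.lt_or_gt with hneg | hpos
  · refine splitRank_le_two_of_areaForm_eq hvalid hα hq hp hqγ (neg_pos.2 hneg) fun i => ?_
    rw [← neg_sub, map_neg, LinearMap.neg_apply, hc, neg_mul]
  · exact splitRank_le_two_of_areaForm_eq hvalid hα hp hq hpγ hpos hc

end TwoRays

theorem two_variable_split_rank_le_two_general
    (r : Fin 2 → Pt) (f : Pt) (hr_rat : ∀ i, IsRatPt (r i)) (α : Fin 2 → ℝ) (γ : ℝ)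
    (hfacet : IsFacet 2 r f α γ) : splitRank 2 r f α γ ≤ 2 := by
  have hne := hfacet.nonempty_mixedP
  by_cases hindep : areaForm (r 0) (r 1) = 0
  · have hpar : ∀ i j, areaForm (r i) (r j) = 0 := by
      simp [Fin.forall_fin_two, hindep, areaForm_swap (r 0) (r 1)]
    obtain ⟨e, d, hed, hline⟩ := exists_isLatticeBasis_forall_areaForm_eq_zero hr_rat hpar
    exact (splitRank_le_one_of_areaForm_eq_zero hed hline hne (hfacet.1.nonneg hr_rat hne)
      hfacet.1).trans one_le_two
  · obtain ⟨M, hM, hdiscrete⟩ := exists_pos_forall_exists_int_eq_mul_sub hr_rat hindep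
    obtain ⟨B, hBP, hB, hgen⟩ := exists_finite_mixedP_subset_add (f := f) hM hdiscrete
    exact splitRank_le_two_of_tight hindep hfacet.1
      (hfacet.nontrivial_tight hr_rat le_rfl hBP hB hgen)

theorem two_variable_split_rank_le_two
    (r : Fin 2 → Pt) (f : Pt)
    (hr_rat : ∀ i, IsRatPt (r i)) (hr_ne : ∀ i, r i ≠ 0)
    (hf_rat : IsRatPt f) (hf_int : ¬ IsIntPt f)
    (hne : (mixedP 2 r f).Nonempty)
    (α : Fin 2 → ℝ) (hα : ∀ i, 0 ≤ α i)
    (hfacet : IsFacet 2 r f α 1) :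
    splitRank 2 r f α 1 ≤ (2 : ℕ∞) :=
  two_variable_split_rank_le_two_general r f hr_rat α 1 hfacet
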